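/- Let G be a finite group whose power graph contains an induced 4-cycle (four pairwise distinct vertices a, b, c, d with a–b, b–c, c–d, d–a adjacent and a–c, b–d non-adjacent). Then the power graph of G contains an induced 4-cycle a', b', c', d' in which both a' and c' have prime order and a' ∈ ⟨b'⟩ ∩ ⟨d'⟩ and c' ∈ ⟨b'⟩ ∩ ⟨d'⟩ (i.e., a power-reduced induced 4-cycle whose in-vertices have prime order). -/

import Mathlib

/-- The power graph of a group: distinct `x` and `y` are adjacent iff one is a power
of the other. -/
def powerGraph (G : Type*) [Group G] : SimpleGraph G :=
  SimpleGraph.fromRel (fun x y => x ∈ Subgroup.zpowers y)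

/-- Four pairwise distinct vertices forming an induced 4-cycle in the power graph. -/
def IsInducedFourCycle {G : Type*} [Group G] (a b c d : G) : Prop :=
  a ≠ b ∧ a ≠ c ∧ a ≠ d ∧ b ≠ c ∧ b ≠ d ∧ c ≠ d ∧
    (powerGraph G).Adj a b ∧ (powerGraph G).Adj b c ∧ (powerGraph G).Adj c d ∧
    (powerGraph G).Adj d a ∧ ¬ (powerGraph G).Adj a c ∧ ¬ (powerGraph G).Adj b d

/-!
The relation "is a power of" is transitive, so in an induced 4-cycle `a b c d` it cannot pass
through a vertex: up to rotation, `a` and `c` both lie in `⟨b⟩ ∩ ⟨d⟩`. Finite-order elements of the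
cyclic group `⟨b⟩` are comparable exactly when their orders are comparable under divisibility. So
neither of the orders of `a` and `c` divides the other, and comparing valuations gives distinct
primes `p ∣ orderOf a` and `q ∣ orderOf c`. Replacing `a` and `c` by powers of order `p` and `q`
keeps the cycle induced.
-/

open Subgroup

lemma exists_prime_ne_prime_of_incompRel_dvd {m n : ℕ} (h : IncompRel (· ∣ ·) m n) :
    ∃ p q : ℕ, p.Prime ∧ q.Prime ∧ p ≠ q ∧ p ∣ m ∧ q ∣ n := by
  have hn : n ≠ 0 := fun hn => h.1 (hn ▸ dvd_zero m)
  have hm : m ≠ 0 := fun hm => h.2 (hm ▸ dvd_zero n)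
  obtain ⟨p, hp, hpmn⟩ : ∃ p : ℕ, p.Prime ∧ n.factorization p < m.factorization p := by
    simpa only [← Nat.factorization_prime_le_iff_dvd hm hn, not_forall, not_le, exists_prop]
      using h.1
  obtain ⟨q, hq, hqnm⟩ : ∃ q : ℕ, q.Prime ∧ m.factorization q < n.factorization q := by
    simpa only [← Nat.factorization_prime_le_iff_dvd hn hm, not_forall, not_le, exists_prop]
      using h.2
  refine ⟨p, q, hp, hq, ?_, Nat.dvd_of_factorization_pos hpmn.ne_bot,
    Nat.dvd_of_factorization_pos hqnm.ne_bot⟩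
  rintro rfl
  exact hpmn.asymm hqnm

section Group

variable {G : Type*} [Group G] {a b c d x y : G}

lemma exists_mem_zpowers_orderOf_eq {n : ℕ} (hx : IsOfFinOrder x) (hn : n ∣ orderOf x) :
    ∃ y ∈ zpowers x, orderOf y = n :=
  ⟨x ^ (orderOf x / n), npow_mem_zpowers x _, orderOf_pow_orderOf_div hx.orderOf_pos.ne' hn⟩

-- The `n`-torsion of a cyclic group is cyclic, so it has at most `n` elements; an element `y` of
-- order `n` therefore generates all of it.
lemma mem_zpowers_of_orderOf_dvd [IsCyclic G] (hy : IsOfFinOrder y)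
    (hxy : orderOf x ∣ orderOf y) : x ∈ zpowers y := by
  let : CommGroup G := IsCyclic.commGroup
  let torsion : Subgroup G := (powMonoidHom (orderOf y)).ker
  have mem_torsion {z : G} : z ∈ torsion ↔ orderOf z ∣ orderOf y := by
    rw [MonoidHom.mem_ker, powMonoidHom_apply, orderOf_dvd_iff_pow_eq_one]
  obtain ⟨g, hg⟩ : ∃ g, zpowers g = torsion :=
    torsion.isCyclic_iff_exists_zpowers_eq_top.mp inferInstance
  have hgy : orderOf g ∣ orderOf y := mem_torsion.mp (hg ▸ mem_zpowers g)
  have hyg : y ∈ zpowers g := hg ▸ mem_torsion.mpr dvd_rfl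
  have : Finite (zpowers g) := (hy.mono hgy).finite_zpowers
  have hcard : Nat.card (zpowers g) ≤ Nat.card (zpowers y) := by
    simpa only [Nat.card_zpowers] using Nat.le_of_dvd hy.orderOf_pos hgy
  rw [eq_of_le_of_card_ge (zpowers_le.mpr hyg) hcard, hg]
  exact mem_torsion.mpr hxy

lemma mem_zpowers_iff_orderOf_dvd_of_mem_zpowers (hx : x ∈ zpowers b) (hy : y ∈ zpowers b)
    (hy_fin : IsOfFinOrder y) : x ∈ zpowers y ↔ orderOf x ∣ orderOf y := by
  refine ⟨orderOf_dvd_of_mem_zpowers, fun hxy => ?_⟩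
  lift x to zpowers b using hx
  lift y to zpowers b using hy
  rw [orderOf_coe, orderOf_coe] at hxy
  obtain ⟨k, rfl⟩ := mem_zpowers_iff.mp
    (mem_zpowers_of_orderOf_dvd (Submonoid.isOfFinOrder_coe.mp hy_fin) hxy)
  exact zpow_mem_zpowers _ k

/-- Neither of `x` and `y` is a power of the other: they are distinct and non-adjacent in the power
graph. -/
abbrev PowerIncomparable (x y : G) : Prop :=
  IncompRel (fun u v : G => u ∈ zpowers v) x y

lemma powerIncomparable_iff_incompRel_orderOf (hx : x ∈ zpowers b) (hy : y ∈ zpowers b)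
    (hx_fin : IsOfFinOrder x) (hy_fin : IsOfFinOrder y) :
    PowerIncomparable x y ↔ IncompRel (· ∣ ·) (orderOf x) (orderOf y) :=
  and_congr (mem_zpowers_iff_orderOf_dvd_of_mem_zpowers hx hy hy_fin).not
    (mem_zpowers_iff_orderOf_dvd_of_mem_zpowers hy hx hx_fin).not

lemma PowerIncomparable.exists_prime_orderOf (h : PowerIncomparable a c) (hab : a ∈ zpowers b)
    (hcb : c ∈ zpowers b) (ha : IsOfFinOrder a) (hc : IsOfFinOrder c) :
    ∃ x ∈ zpowers a, ∃ y ∈ zpowers c,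
      (orderOf x).Prime ∧ (orderOf y).Prime ∧ PowerIncomparable x y := by
  obtain ⟨p, q, hp, hq, hpq, hpa, hqc⟩ := exists_prime_ne_prime_of_incompRel_dvd
    ((powerIncomparable_iff_incompRel_orderOf hab hcb ha hc).mp h)
  obtain ⟨x, hxa, rfl⟩ := exists_mem_zpowers_orderOf_eq ha hpa
  obtain ⟨y, hyc, rfl⟩ := exists_mem_zpowers_orderOf_eq hc hqc
  refine ⟨x, hxa, y, hyc, hp, hq, fun hxy => hpq ?_, fun hyx => hpq.symm ?_⟩
  · exact (Nat.prime_dvd_prime_iff_eq hp hq).mp (orderOf_dvd_of_mem_zpowers hxy)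
  · exact (Nat.prime_dvd_prime_iff_eq hq hp).mp (orderOf_dvd_of_mem_zpowers hyx)

lemma powerGraph_adj : (powerGraph G).Adj x y ↔ x ≠ y ∧ (x ∈ zpowers y ∨ y ∈ zpowers x) :=
  SimpleGraph.fromRel_adj _ x y

lemma powerIncomparable_iff_ne_and_not_adj :
    PowerIncomparable x y ↔ x ≠ y ∧ ¬ (powerGraph G).Adj x y := by
  have ne_of_incomparable : PowerIncomparable x y → x ≠ y := by
    rintro h rfl
    exact h.1 (mem_zpowers x)
  simp only [powerGraph_adj, IncompRel] at ne_of_incomparable ⊢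
  tauto

lemma isInducedFourCycle_iff :
    IsInducedFourCycle a b c d ↔
      (powerGraph G).Adj a b ∧ (powerGraph G).Adj b c ∧ (powerGraph G).Adj c d ∧
        (powerGraph G).Adj d a ∧ PowerIncomparable a c ∧ PowerIncomparable b d := by
  have ne_of_adj {u v : G} : (powerGraph G).Adj u v → u ≠ v := SimpleGraph.Adj.ne
  simp only [IsInducedFourCycle, powerIncomparable_iff_ne_and_not_adj]
  grind

lemma IsInducedFourCycle.rotate (h : IsInducedFourCycle a b c d) : IsInducedFourCycle b c d a := by
  rw [isInducedFourCycle_iff] at h ⊢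
  obtain ⟨hab, hbc, hcd, hda, hac, hbd⟩ := h
  exact ⟨hbc, hcd, hda, hab, hbd, hac.symm⟩

lemma isInducedFourCycle_of_mem_inf (ha : a ∈ zpowers b ⊓ zpowers d)
    (hc : c ∈ zpowers b ⊓ zpowers d) (hac : PowerIncomparable a c)
    (hbd : PowerIncomparable b d) : IsInducedFourCycle a b c d := by
  have adj_of_mem {u v w : G} (hu : u ∈ zpowers w) (hv : v ∈ zpowers w)
      (huv : PowerIncomparable u v) : (powerGraph G).Adj u w := by
    refine powerGraph_adj.mpr ⟨?_, Or.inl hu⟩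
    rintro rfl
    exact huv.2 hv
  exact isInducedFourCycle_iff.mpr
    ⟨adj_of_mem ha.1 hc.1 hac, (adj_of_mem hc.1 ha.1 hac.symm).symm,
      adj_of_mem hc.2 ha.2 hac.symm, (adj_of_mem ha.2 hc.2 hac).symm, hac, hbd⟩

lemma IsInducedFourCycle.mem_inf_or_mem_inf (h : IsInducedFourCycle a b c d) :
    (a ∈ zpowers b ⊓ zpowers d ∧ c ∈ zpowers b ⊓ zpowers d) ∨
      (b ∈ zpowers c ⊓ zpowers a ∧ d ∈ zpowers c ⊓ zpowers a) := by
  simp only [isInducedFourCycle_iff, powerGraph_adj] at h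
  obtain ⟨⟨-, hab⟩, ⟨-, hbc⟩, ⟨-, hcd⟩, ⟨-, hda⟩, hac, hbd⟩ := h
  have trans {u v w : G} (huv : u ∈ zpowers v) (hvw : v ∈ zpowers w) : u ∈ zpowers w :=
    zpowers_le.mpr hvw huv
  rcases hab with hab | hba
  · have hcb := hbc.resolve_left fun hbc => hac.1 (trans hab hbc)
    have hcd := hcd.resolve_right fun hdc => hbd.2 (trans hdc hcb)
    have had := hda.resolve_left fun hda => hac.2 (trans hcd hda)
    exact Or.inl ⟨⟨hab, had⟩, ⟨hcb, hcd⟩⟩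
  · have hda := hda.resolve_right fun had => hbd.1 (trans hba had)
    have hdc := hcd.resolve_left fun hcd => hac.2 (trans hcd hda)
    have hbc := hbc.resolve_right fun hcb => hbd.2 (trans hdc hcb)
    exact Or.inr ⟨⟨hbc, hba⟩, ⟨hdc, hda⟩⟩

lemma IsInducedFourCycle.exists_prime_orderOf (h : IsInducedFourCycle a b c d)
    (ha : a ∈ zpowers b ⊓ zpowers d) (hc : c ∈ zpowers b ⊓ zpowers d)
    (ha_fin : IsOfFinOrder a) (hc_fin : IsOfFinOrder c) :
    ∃ x y : G, IsInducedFourCycle x b y d ∧ (orderOf x).Prime ∧ (orderOf y).Prime ∧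
      x ∈ zpowers b ⊓ zpowers d ∧ y ∈ zpowers b ⊓ zpowers d := by
  obtain ⟨-, -, -, -, hac, hbd⟩ := isInducedFourCycle_iff.mp h
  obtain ⟨x, hxa, y, hyc, hx, hy, hxy⟩ := hac.exists_prime_orderOf ha.1 hc.1 ha_fin hc_fin
  have hx_mem : x ∈ zpowers b ⊓ zpowers d := zpowers_le.mpr ha hxa
  have hy_mem : y ∈ zpowers b ⊓ zpowers d := zpowers_le.mpr hc hyc
  exact ⟨x, y, isInducedFourCycle_of_mem_inf hx_mem hy_mem hxy hbd, hx, hy, hx_mem, hy_mem⟩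

end Group

theorem stmt19_general (G : Type*) [Group G] (hG : IsMulTorsion G)
    (h : ∃ a b c d : G, IsInducedFourCycle a b c d) :
    ∃ a' b' c' d' : G, IsInducedFourCycle a' b' c' d' ∧
      (orderOf a').Prime ∧ (orderOf c').Prime ∧
      a' ∈ zpowers b' ⊓ zpowers d' ∧
      c' ∈ zpowers b' ⊓ zpowers d' := by
  obtain ⟨a, b, c, d, h⟩ := h
  rcases h.mem_inf_or_mem_inf with ⟨ha, hc⟩ | ⟨hb, hd⟩
  · obtain ⟨x, y, hxy⟩ := h.exists_prime_orderOf ha hc (hG a) (hG c)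
    exact ⟨x, b, y, d, hxy⟩
  · obtain ⟨x, y, hxy⟩ := h.rotate.exists_prime_orderOf hb hd (hG b) (hG d)
    exact ⟨x, c, y, a, hxy⟩

theorem stmt19 (G : Type*) [Group G] [Fintype G]
    (h : ∃ a b c d : G, IsInducedFourCycle a b c d) :
    ∃ a' b' c' d' : G, IsInducedFourCycle a' b' c' d' ∧
      (orderOf a').Prime ∧ (orderOf c').Prime ∧
      a' ∈ Subgroup.zpowers b' ⊓ Subgroup.zpowers d' ∧
      c' ∈ Subgroup.zpowers b' ⊓ Subgroup.zpowers d' :=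
  stmt19_general G isMulTorsion_of_finite h
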